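/- Let m \ge 1 and t \ge 2 be integers and C > 0 a real number such that k := t + (C \log m / \log t) t is an integer. If additionally t \ge m^{10C}, then k! \le t! \cdot (1.1)^k \cdot m^{Ct}. -/

import Mathlib

open Real

theorem stmt_9 (m t k : ℕ) (C : ℝ) (hm : 1 ≤ m) (ht : 2 ≤ t) (hC : 0 < C)
    (hk : (k : ℝ) = t + (C * Real.log m / Real.log t) * t)
    (htm : (m : ℝ) ^ (10 * C) ≤ t) :
    (k.factorial : ℝ) ≤ (t.factorial : ℝ) * (1.1 : ℝ) ^ k * (m : ℝ) ^ (C * t) := by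
  have hm' : (0 : ℝ) < m := by exact_mod_cast hm
  have ht' : (2 : ℝ) ≤ t := by exact_mod_cast ht
  have ht0 : (0 : ℝ) < t := by linarith
  have hlt : 0 < Real.log t := Real.log_pos (by linarith)
  have hlm : 0 ≤ Real.log m := Real.log_nonneg (by exact_mod_cast hm)
  have h1 : 10 * C * Real.log m ≤ Real.log t := by
    rw [← Real.log_rpow hm']
    exact Real.log_le_log (by positivity) htm
  set x := C * Real.log m / Real.log t with hx
  have hx0 : 0 ≤ x := by positivity
  have hx1 : x ≤ 1 / 10 := by
    rw [hx, div_le_iff₀ hlt]; linarith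
  have hxl : x * Real.log t = C * Real.log m := by
    rw [hx]; field_simp
  have htk : t ≤ k := by
    have : (t : ℝ) ≤ k := by rw [hk]; nlinarith [mul_nonneg hx0 ht0.le]
    exact_mod_cast this
  obtain ⟨d, rfl⟩ := Nat.exists_eq_add_of_le htk
  have hd : (d : ℝ) = x * t := by push_cast at hk; linarith
  have hpow : (m : ℝ) ^ (C * t) = (t : ℝ) ^ d := by
    rw [← Real.rpow_natCast, Real.rpow_def_of_pos hm', Real.rpow_def_of_pos ht0, hd]
    congr 1
    linear_combination (-(t : ℝ)) * hxl
  have hf : ((t + d).factorial : ℝ) ≤ t.factorial * ((t + d : ℕ) : ℝ) ^ d := by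
    rw [← Nat.factorial_mul_ascFactorial]
    exact_mod_cast Nat.mul_le_mul_left _ (Nat.ascFactorial_le_pow_add t d)
  have hb : ((t + d : ℕ) : ℝ) ≤ 1.1 * t := by
    push_cast; rw [hd]; nlinarith
  rw [hpow, mul_assoc]
  refine hf.trans (mul_le_mul_of_nonneg_left ?_ (by positivity))
  calc ((t + d : ℕ) : ℝ) ^ d ≤ (1.1 * t) ^ d := by gcongr
    _ = 1.1 ^ d * (t : ℝ) ^ d := mul_pow _ _ _
    _ ≤ _ := by
      gcongr
      · norm_num
      · omega
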